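/- arXiv:1802.04856 — 2 statements merged into one kernel-verified Lean document; each statement's English description precedes it below -/
import Mathlib

section
/- In the quantum matrix bialgebra A(n; q), the quantum determinant det_q(x) = Σ_{v ∈ S_n} (-q^{-1/2})^{ℓ(v)} x_{v(1),1} ⋯ x_{v(n),n} is a central element: it commutes with every generator x_{i,j}. -/
noncomputable section

attribute [local instance] Classical.propDecidable

/-- The adjacent transposition `s_{i+1}` swapping `i` and `i+1` in `S_{n+1}`. -/
def adjT {n : ℕ} (i : Fin n) : Equiv.Perm (Fin (n + 1)) :=
  Equiv.swap i.castSucc i.succ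

/-- Coxeter length: minimal number of adjacent transpositions whose product is `w`. -/
def len {m : ℕ} (w : Equiv.Perm (Fin m)) : ℕ :=
  sInf {k | ∃ l : List (Equiv.Perm (Fin m)), l.length = k ∧
    (∀ s ∈ l, ∃ p : Fin m × Fin m, (p.1 : ℕ) + 1 = (p.2 : ℕ) ∧ s = Equiv.swap p.1 p.2) ∧
    l.prod = w}

/-- Product of the word of generators given by a list of indices. -/
def wordProd {n : ℕ} (l : List (Fin n)) : Equiv.Perm (Fin (n + 1)) :=
  (l.map adjT).prod

/-- `l` is a reduced word for `w`. -/
def IsRedWord {n : ℕ} (l : List (Fin n)) (w : Equiv.Perm (Fin (n + 1))) : Prop :=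
  wordProd l = w ∧ l.length = len w

/-- Bruhat order. -/
def BruhatLE {n : ℕ} (u v : Equiv.Perm (Fin (n + 1))) : Prop :=
  ∀ l : List (Fin n), IsRedWord l v → ∃ l' : List (Fin n), l'.Sublist l ∧ IsRedWord l' u

/-- Left weak order. -/
def WeakLE {n : ℕ} (t u : Equiv.Perm (Fin (n + 1))) : Prop :=
  len u = len (u * t⁻¹) + len t

/-- The base ring `ℤ[q^{1/2}, q^{-1/2}]`, with `T 1 = q^{1/2}`. -/
abbrev A := LaurentPolynomial ℤ

def qh : A := LaurentPolynomial.T 1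
def qhi : A := LaurentPolynomial.T (-1)
def qq : A := LaurentPolynomial.T 2

/-- Relations of the quantum matrix bialgebra `A(m;q)`. -/
inductive QRel (m : ℕ) : FreeAlgebra A (Fin m × Fin m) → FreeAlgebra A (Fin m × Fin m) → Prop
  | r1 (i k l : Fin m) (h : k < l) :
      QRel m (FreeAlgebra.ι A (i, l) * FreeAlgebra.ι A (i, k))
        (algebraMap A _ qh * (FreeAlgebra.ι A (i, k) * FreeAlgebra.ι A (i, l)))
  | r2 (i j k : Fin m) (h : i < j) :
      QRel m (FreeAlgebra.ι A (j, k) * FreeAlgebra.ι A (i, k))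
        (algebraMap A _ qh * (FreeAlgebra.ι A (i, k) * FreeAlgebra.ι A (j, k)))
  | r3 (i j k l : Fin m) (hij : i < j) (hkl : k < l) :
      QRel m (FreeAlgebra.ι A (j, k) * FreeAlgebra.ι A (i, l))
        (FreeAlgebra.ι A (i, l) * FreeAlgebra.ι A (j, k))
  | r4 (i j k l : Fin m) (hij : i < j) (hkl : k < l) :
      QRel m (FreeAlgebra.ι A (j, l) * FreeAlgebra.ι A (i, k))
        (FreeAlgebra.ι A (i, k) * FreeAlgebra.ι A (j, l) +
          algebraMap A _ (qh - qhi) * (FreeAlgebra.ι A (i, l) * FreeAlgebra.ι A (j, k)))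

/-- The quantum matrix bialgebra `A(m;q)`. -/
abbrev Qmb (m : ℕ) := RingQuot (QRel m)

/-- The generator `x_{i,j}` of the quantum matrix bialgebra. -/
def Xg {m : ℕ} (i j : Fin m) : Qmb m :=
  RingQuot.mkAlgHom A (QRel m) (FreeAlgebra.ι A (i, j))

/-- The zero-weight-space monomial `x^{u,v} = x_{u(1),v(1)} ⋯ x_{u(m),v(m)}`. -/
def xm {m : ℕ} (u v : Equiv.Perm (Fin m)) : Qmb m :=
  (List.ofFn fun k : Fin m => Xg (u k) (v k)).prod

/-- The quantum determinant `det_q(x) = Σ_v (-q^{-1/2})^{ℓ(v)} x_{v(1),1}⋯x_{v(m),m}`. -/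
def qdet (m : ℕ) : Qmb m :=
  ∑ v : Equiv.Perm (Fin m),
    ((-qhi) ^ len v) • (List.ofFn fun k : Fin m => Xg (v k) k).prod

/-!
Let `x` be a matrix whose entries satisfy the relations of the quantum matrix bialgebra. One matrix
of signed quantum minors, the quantum adjugate of `x`, is both a left and a right inverse of `x` up
to the factor `det`, so `det · x = (x · adj) · x = x · (adj · x) = x · det`, which entrywise is the
centrality of `det`.

The expansions of `det` that give these two products come down to one of them. Expanding along the
first column is a matter of definition, and the relations between two adjacent columns say that
`det` is `q`-alternating in its columns, which gives the expansion along every column. The relations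
are symmetric under transposition, which preserves `det` because bubble sorting the factors of
`x_{v(1),1} ⋯ x_{v(n),n}` only exchanges commuting entries, and under reversing the rows, the
columns and the multiplication; these symmetries turn column expansions into row expansions and left
expansions into right ones.
-/

open Function MulOpposite
open scoped Matrix MulOpposite

section Inversions

/-- The inversions of a word `f`: pairs of positions `a < b` with `f b < f a`. -/
def inversions {ι α : Type*} [Fintype ι] [LT ι] [LT α] (f : ι → α) : Finset (ι × ι) :=
  {p | p.1 < p.2 ∧ f p.2 < f p.1}

/-- The number of inversions of a word; for a permutation of `Fin n` it is the Coxeter length, by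
`len_eq_inversionCount`. -/
def inversionCount {ι α : Type*} [Fintype ι] [LT ι] [LT α] (f : ι → α) : ℕ :=
  (inversions f).card

lemma mem_inversions {ι α : Type*} [Fintype ι] [LT ι] [LT α] {f : ι → α} {a b : ι} :
    (a, b) ∈ inversions f ↔ a < b ∧ f b < f a :=
  Finset.mem_filter_univ _

variable {α : Type*} {n : ℕ}

lemma adjT_castSucc (k : Fin n) : adjT k k.castSucc = k.succ :=
  Equiv.swap_apply_left _ _

lemma adjT_succ (k : Fin n) : adjT k k.succ = k.castSucc :=
  Equiv.swap_apply_right _ _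

lemma adjT_adjT (k : Fin n) (a : Fin (n + 1)) : adjT k (adjT k a) = a :=
  Equiv.swap_apply_self _ _ _

lemma adjT_mul_self (k : Fin n) : adjT k * adjT k = 1 :=
  Equiv.swap_mul_self _ _

lemma comp_adjT_comp_adjT (f : Fin (n + 1) → α) (k : Fin n) : (f ∘ adjT k) ∘ adjT k = f :=
  funext fun a => congrArg f (adjT_adjT k a)

lemma adjT_lt_adjT {k : Fin n} {a b : Fin (n + 1)} (hab : a < b)
    (hne : (a, b) ≠ (k.castSucc, k.succ)) : adjT k a < adjT k b := by
  simp only [ne_eq, Prod.mk.injEq, not_and, Fin.ext_iff, Fin.val_castSucc, Fin.val_succ] at hne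
  simp only [adjT, Equiv.swap_apply_def, Fin.lt_def, Fin.ext_iff] at hab ⊢
  split_ifs <;> simp only [Fin.val_castSucc, Fin.val_succ] at * <;> omega

lemma inversionCount_eq_zero {ι : Type*} [Fintype ι] [Preorder ι] [Preorder α] {f : ι → α}
    (hf : StrictMono f) : inversionCount f = 0 := by
  rw [inversionCount, Finset.card_eq_zero, Finset.eq_empty_iff_forall_notMem]
  rintro ⟨a, b⟩ h
  obtain ⟨hab, hba⟩ := mem_inversions.1 h
  exact lt_asymm (hf hab) hba

lemma inversionCount_comp_adjT [Preorder α] {f : Fin (n + 1) → α} {k : Fin n}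
    (h : f k.castSucc < f k.succ) :
    inversionCount (f ∘ adjT k) = inversionCount f + 1 := by
  have hmem : (k.castSucc, k.succ) ∈ inversions (f ∘ adjT k) := by
    simpa [mem_inversions, adjT_castSucc, adjT_succ] using h
  rw [inversionCount, inversionCount, ← Finset.card_erase_add_one hmem, Nat.add_right_cancel_iff,
    eq_comm]
  refine Finset.card_equiv (Equiv.prodCongr (adjT k) (adjT k)) ?_
  rintro ⟨a, b⟩
  simp only [Finset.mem_erase, Equiv.prodCongr_apply, Prod.map_apply, mem_inversions, comp_apply,
    adjT_adjT]
  constructor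
  · rintro ⟨hab, hf⟩
    refine ⟨fun he => ?_, adjT_lt_adjT hab ?_, hf⟩
    · obtain ⟨ha, hb⟩ := Prod.mk.inj he
      rw [← adjT_adjT k a, ← adjT_adjT k b, ha, hb, adjT_castSucc, adjT_succ] at hab
      exact lt_asymm hab Fin.castSucc_lt_succ
    · rintro ⟨⟩
      exact lt_asymm h hf
  · rintro ⟨hne, hab, hf⟩
    simpa [adjT_adjT, hf] using adjT_lt_adjT hab hne

lemma inversionCount_eq_card_add [LT α] (f : Fin (n + 1) → α) :
    inversionCount f =
      Finset.card {b : Fin n | f b.succ < f 0} + inversionCount (f ∘ Fin.succ) := by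
  simp only [inversionCount, inversions, Finset.card_filter, Fintype.sum_prod_type,
    Fin.sum_univ_succ, comp_apply, Fin.succ_lt_succ_iff, Fin.succ_pos, true_and, false_and,
    if_false, zero_add, Fin.not_lt_zero]

lemma inversionCount_strictMono_comp {β ι : Type*} [Fintype ι] [LT ι] [LinearOrder α] [Preorder β]
    {g : α → β} (hg : StrictMono g) (f : ι → α) :
    inversionCount (g ∘ f) = inversionCount f := by
  simp only [inversionCount, inversions, comp_apply, hg.lt_iff_lt]

lemma inversionCount_inv {ι : Type*} [Fintype ι] [LT ι] (σ : Equiv.Perm ι) :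
    inversionCount ⇑σ⁻¹ = inversionCount σ := by
  refine (Finset.card_equiv ((Equiv.prodComm ι ι).trans (σ.prodCongr σ)) ?_).symm
  rintro ⟨a, b⟩
  simp [mem_inversions, and_comm]

lemma inversionCount_rev {m : ℕ} (f : Fin m → Fin n) :
    inversionCount (Fin.rev ∘ f ∘ Fin.rev) = inversionCount f := by
  refine Finset.card_equiv ((Equiv.prodComm _ _).trans (Fin.revPerm.prodCongr Fin.revPerm)) ?_
  rintro ⟨a, b⟩
  simp [mem_inversions]

/-- Bubble sort as an induction principle. -/
theorem word_induction [LinearOrder α] {motive : (Fin (n + 1) → α) → Prop}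
    (strictMono : ∀ f, StrictMono f → motive f)
    (adjacent_eq : ∀ f (k : Fin n), f k.castSucc = f k.succ → motive f)
    (comp_adjT : ∀ f (k : Fin n), f k.castSucc < f k.succ → motive f → motive (f ∘ adjT k))
    (f : Fin (n + 1) → α) : motive f := by
  induction hN : inversionCount f using Nat.strong_induction_on generalizing f with
  | _ N ih =>
    by_cases hf : StrictMono f
    · exact strictMono f hf
    obtain ⟨k, hk⟩ : ∃ k : Fin n, f k.succ ≤ f k.castSucc := by
      simpa [Fin.strictMono_iff_lt_succ] using hf
    rcases hk.lt_or_eq with hlt | heq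
    · have hasc : (f ∘ adjT k) k.castSucc < (f ∘ adjT k) k.succ := by
        simpa [adjT_castSucc, adjT_succ] using hlt
      have hcount := inversionCount_comp_adjT hasc
      rw [comp_adjT_comp_adjT] at hcount
      rw [← comp_adjT_comp_adjT f k]
      exact comp_adjT _ k hasc (ih _ (by omega) _ rfl)
    · exact adjacent_eq f k heq.symm

theorem perm_induction {motive : Equiv.Perm (Fin (n + 1)) → Prop} (one : motive 1)
    (mul_adjT : ∀ σ (k : Fin n), σ k.castSucc < σ k.succ → motive σ → motive (σ * adjT k))
    (σ : Equiv.Perm (Fin (n + 1))) : motive σ := by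
  suffices ∀ f : Fin (n + 1) → Fin (n + 1), ∀ σ : Equiv.Perm (Fin (n + 1)), ⇑σ = f → motive σ from
    this σ σ rfl
  refine word_induction ?_ ?_ ?_
  · rintro _ hf σ rfl
    obtain rfl : σ = 1 := Equiv.ext (congrFun hf.eq_id)
    exact one
  · rintro _ k hk σ rfl
    exact absurd (σ.injective hk) Fin.castSucc_lt_succ.ne
  · rintro f k hk ih σ hσ
    have hf : ⇑(σ * adjT k) = f := by
      rw [Equiv.Perm.coe_mul, hσ, comp_adjT_comp_adjT]
    simpa [mul_assoc, adjT_mul_self] using mul_adjT (σ * adjT k) k (hf ▸ hk) (ih _ hf)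

end Inversions

section CoxeterLength

/-- The simple reflections of the symmetric group, in the form in which they enter `len`. -/
def IsAdjacentSwap {m : ℕ} (s : Equiv.Perm (Fin m)) : Prop :=
  ∃ p : Fin m × Fin m, (p.1 : ℕ) + 1 = (p.2 : ℕ) ∧ s = Equiv.swap p.1 p.2

variable {n : ℕ}

lemma isAdjacentSwap_iff {s : Equiv.Perm (Fin (n + 1))} :
    IsAdjacentSwap s ↔ ∃ k : Fin n, s = adjT k := by
  constructor
  · rintro ⟨⟨a, b⟩, hab, rfl⟩
    dsimp only at hab
    refine ⟨⟨a, by omega⟩, ?_⟩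
    rw [adjT]
    congr 1
    exact Fin.ext hab.symm
  · rintro ⟨k, rfl⟩
    exact ⟨(k.castSucc, k.succ), rfl, rfl⟩

lemma exists_adjacentSwap_word (σ : Equiv.Perm (Fin (n + 1))) :
    ∃ l : List (Equiv.Perm (Fin (n + 1))),
      l.length = inversionCount σ ∧ (∀ s ∈ l, IsAdjacentSwap s) ∧ l.prod = σ := by
  induction σ using perm_induction with
  | one => exact ⟨[], (inversionCount_eq_zero strictMono_id).symm, by simp, rfl⟩
  | mul_adjT σ k hk ih =>
    obtain ⟨l, hlength, hl, hprod⟩ := ih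
    refine ⟨l ++ [adjT k], ?_, ?_, by simp [hprod]⟩
    · rw [Equiv.Perm.coe_mul, inversionCount_comp_adjT hk]
      simp [hlength]
    · simpa [or_imp, forall_and, isAdjacentSwap_iff] using hl

lemma inversionCount_mul_adjT_le (σ : Equiv.Perm (Fin (n + 1))) (k : Fin n) :
    inversionCount ⇑(σ * adjT k) ≤ inversionCount σ + 1 := by
  rcases (σ.injective.ne (Fin.castSucc_lt_succ (i := k)).ne).lt_or_gt with h | h
  · exact (inversionCount_comp_adjT h).le
  · have hasc : (σ * adjT k) k.castSucc < (σ * adjT k) k.succ := by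
      simpa [adjT_castSucc, adjT_succ] using h
    have := inversionCount_comp_adjT hasc
    rw [Equiv.Perm.coe_mul, comp_adjT_comp_adjT] at this
    rw [Equiv.Perm.coe_mul]
    omega

lemma inversionCount_prod_le (l : List (Equiv.Perm (Fin (n + 1))))
    (hl : ∀ s ∈ l, IsAdjacentSwap s) : inversionCount ⇑l.prod ≤ l.length := by
  induction l using List.reverseRecOn with
  | nil => exact (inversionCount_eq_zero strictMono_id).le
  | append_singleton l s ih =>
    obtain ⟨k, rfl⟩ := isAdjacentSwap_iff.1 (hl s (by simp))
    rw [List.prod_append, List.prod_singleton, List.length_append, List.length_singleton]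
    exact (inversionCount_mul_adjT_le _ k).trans
      (Nat.add_le_add_right (ih fun t ht => hl t (by simp [ht])) 1)

theorem len_eq_inversionCount {m : ℕ} (σ : Equiv.Perm (Fin m)) : len σ = inversionCount σ := by
  cases m with
  | zero =>
    rw [inversionCount_eq_zero (Subsingleton.strictMono _)]
    exact Nat.le_zero.1 (Nat.sInf_le ⟨[], rfl, by simp, Subsingleton.elim _ _⟩)
  | succ n =>
    refine le_antisymm (Nat.sInf_le (exists_adjacentSwap_word σ)) ?_
    refine le_csInf ⟨_, exists_adjacentSwap_word σ⟩ ?_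
    rintro _ ⟨l, rfl, hl, rfl⟩
    exact inversionCount_prod_le l hl

end CoxeterLength

section WordMonomial

/-- The matrix over the opposite ring obtained by reversing the order of the rows and columns. This
symmetry of the quantum matrix relations exchanges left and right multiplication by minors. -/
def revOp {α : Type*} {m n : ℕ} (x : Matrix (Fin m) (Fin n) α) : Matrix (Fin m) (Fin n) αᵐᵒᵖ :=
  Matrix.of fun i j => op (x i.rev j.rev)

variable {ι κ M : Type*} [Monoid M] {n : ℕ}

/-- The monomial `x_{w(1),f(1)} ⋯ x_{w(n),f(n)}` with row word `w` and column word `f`. -/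
def wordMonomial (x : Matrix ι κ M) (w : Fin n → ι) (f : Fin n → κ) : M :=
  (List.ofFn fun a => x (w a) (f a)).prod

lemma wordMonomial_succ (x : Matrix ι κ M) (w : Fin (n + 1) → ι) (f : Fin (n + 1) → κ) :
    wordMonomial x w f = x (w 0) (f 0) * wordMonomial x (w ∘ Fin.succ) (f ∘ Fin.succ) := by
  simp [wordMonomial]

lemma exists_prod_ofFn_eq_mul_mul (y : Fin (n + 1) → M) (k : Fin n) :
    ∃ P S : M, ∀ z : Fin (n + 1) → M, (∀ a, a ≠ k.castSucc → a ≠ k.succ → z a = y a) →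
      (List.ofFn z).prod = P * (z k.castSucc * z k.succ) * S := by
  induction n with
  | zero => exact k.elim0
  | succ n ih =>
    cases k using Fin.cases with
    | zero =>
      refine ⟨1, (List.ofFn fun a : Fin n => y a.succ.succ).prod, fun z hz => ?_⟩
      have htail : (fun a : Fin n => z a.succ.succ) = fun a => y a.succ.succ :=
        funext fun a => hz _ (Fin.succ_ne_zero _) (by simp [Fin.ext_iff])
      simp [← htail, List.ofFn_succ, mul_assoc]
    | succ k =>
      obtain ⟨P, S, h⟩ := ih (fun a => y a.succ) k
      refine ⟨y 0 * P, S, fun z hz => ?_⟩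
      have hhead : z 0 = y 0 := hz 0 (by simp [Fin.ext_iff]) (Fin.succ_ne_zero _).symm
      rw [List.ofFn_succ, List.prod_cons, hhead, h fun a => z a.succ]
      · simp [mul_assoc]
      · intro a hcast hsucc
        exact hz _ (by simpa [← Fin.succ_castSucc] using hcast) (by simpa using hsucc)

lemma exists_wordMonomial_eq_mul_mul (x : Matrix ι κ M) (w : Fin (n + 1) → ι)
    (f : Fin (n + 1) → κ) (k : Fin n) :
    ∃ P S : M,
      wordMonomial x w f =
        P * (x (w k.castSucc) (f k.castSucc) * x (w k.succ) (f k.succ)) * S ∧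
      wordMonomial x (w ∘ adjT k) f =
        P * (x (w k.succ) (f k.castSucc) * x (w k.castSucc) (f k.succ)) * S ∧
      wordMonomial x w (f ∘ adjT k) =
        P * (x (w k.castSucc) (f k.succ) * x (w k.succ) (f k.castSucc)) * S ∧
      wordMonomial x (w ∘ adjT k) (f ∘ adjT k) =
        P * (x (w k.succ) (f k.succ) * x (w k.castSucc) (f k.castSucc)) * S := by
  obtain ⟨P, S, h⟩ := exists_prod_ofFn_eq_mul_mul (fun a => x (w a) (f a)) k
  have hfix : ∀ a, a ≠ k.castSucc → a ≠ k.succ → adjT k a = a := fun a =>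
    Equiv.swap_apply_of_ne_of_ne
  refine ⟨P, S, h _ fun _ _ _ => rfl, ?_, ?_, ?_⟩
  all_goals
    rw [wordMonomial, h _ fun a hcast hsucc => by simp [hfix a hcast hsucc]]
    simp only [comp_apply, adjT_castSucc, adjT_succ]

lemma wordMonomial_revOp {l m : ℕ} (x : Matrix (Fin l) (Fin m) M) (w : Fin n → Fin l)
    (f : Fin n → Fin m) :
    wordMonomial (revOp x) w f =
      op (wordMonomial x (Fin.rev ∘ w ∘ Fin.rev) (Fin.rev ∘ f ∘ Fin.rev)) := by
  rw [wordMonomial, wordMonomial, op_list_prod]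
  congr 1
  refine List.ext_getElem (by simp) fun a ha _ => ?_
  have han : a < n := by simpa using ha
  have hrev : Fin.rev ⟨a, han⟩ = (⟨n - 1 - a, by omega⟩ : Fin n) :=
    Fin.ext (by simp only [Fin.val_rev]; omega)
  simp [revOp, ← hrev]

end WordMonomial

section QuantumMatrix

variable {K R : Type*} [CommRing K] [Ring R] [Algebra K R]

/-- A matrix over a `K`-algebra whose entries satisfy the defining relations of the quantum matrix
bialgebra, with the unit `q` of `K` in the role of `q^{1/2}`. -/
structure IsQuantumMatrix {ι κ : Type*} [LT ι] [LT κ] (q : Kˣ) (x : Matrix ι κ R) :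
    Prop where
  row_comm {i : ι} {k l : κ} : k < l → x i l * x i k = (q : K) • (x i k * x i l)
  column_comm {i j : ι} {k : κ} : i < j → x j k * x i k = (q : K) • (x i k * x j k)
  antidiagonal_comm {i j : ι} {k l : κ} : i < j → k < l → x j k * x i l = x i l * x j k
  diagonal_comm {i j : ι} {k l : κ} : i < j → k < l →
    x j l * x i k = x i k * x j l + ((q : K) - (q⁻¹ : Kˣ)) • (x i l * x j k)

/-- The quantum determinant of an arbitrary square matrix over a `K`-algebra, with lengths expressed
as inversion counts. -/
def qDet {n : ℕ} (q : Kˣ) (x : Matrix (Fin n) (Fin n) R) : R :=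
  ∑ σ : Equiv.Perm (Fin n), (-q⁻¹) ^ inversionCount σ • wordMonomial x σ id

namespace IsQuantumMatrix

variable {ι κ : Type*} {q : Kˣ} {x : Matrix ι κ R}

protected lemma transpose [LT ι] [LT κ] (hx : IsQuantumMatrix q x) : IsQuantumMatrix q xᵀ where
  row_comm := hx.column_comm
  column_comm := hx.row_comm
  antidiagonal_comm hij hkl := (hx.antidiagonal_comm hkl hij).symm
  diagonal_comm hij hkl := by
    simpa only [Matrix.transpose_apply, hx.antidiagonal_comm hkl hij] using hx.diagonal_comm hkl hij

protected lemma submatrix {ι' κ' : Type*} [Preorder ι] [Preorder κ] [Preorder ι'] [Preorder κ']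
    (hx : IsQuantumMatrix q x) {r : ι' → ι} {c : κ' → κ} (hr : StrictMono r) (hc : StrictMono c) :
    IsQuantumMatrix q (x.submatrix r c) where
  row_comm hkl := hx.row_comm (hc hkl)
  column_comm hij := hx.column_comm (hr hij)
  antidiagonal_comm hij hkl := hx.antidiagonal_comm (hr hij) (hc hkl)
  diagonal_comm hij hkl := hx.diagonal_comm (hr hij) (hc hkl)

protected lemma revOp {m n : ℕ} {x : Matrix (Fin m) (Fin n) R} (hx : IsQuantumMatrix q x) :
    IsQuantumMatrix q (revOp x) where
  row_comm hkl := congrArg op (hx.row_comm (Fin.rev_lt_rev.2 hkl))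
  column_comm hij := congrArg op (hx.column_comm (Fin.rev_lt_rev.2 hij))
  antidiagonal_comm hij hkl :=
    congrArg op (hx.antidiagonal_comm (Fin.rev_lt_rev.2 hij) (Fin.rev_lt_rev.2 hkl))
  diagonal_comm hij hkl :=
    congrArg op (hx.diagonal_comm (Fin.rev_lt_rev.2 hij) (Fin.rev_lt_rev.2 hkl))

lemma column_pair_eq_zero [LT ι] [LT κ] (hx : IsQuantumMatrix q x) {a b : ι} (hab : a < b) (c : κ) :
    x a c * x b c + (-q⁻¹) • (x b c * x a c) = 0 := by
  rw [hx.column_comm hab, Units.neg_smul, ← Units.smul_def, inv_smul_smul, add_neg_cancel]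

lemma column_pair_swap [LT ι] [LT κ] (hx : IsQuantumMatrix q x) {a b : ι} (hab : a < b)
    {c d : κ} (hcd : c < d) :
    x a d * x b c + (-q⁻¹) • (x b d * x a c) =
      (-q⁻¹) • (x a c * x b d + (-q⁻¹) • (x b c * x a d)) := by
  have hq : ((q⁻¹ : Kˣ) : K) * q = 1 := q.inv_mul
  rw [hx.diagonal_comm hab hcd, hx.antidiagonal_comm hab hcd]
  simp only [Units.smul_def, Units.val_neg]
  match_scalars
  · linear_combination -hq
  · ring

end IsQuantumMatrix

section Alternating

variable {n : ℕ}

lemma sum_perm_eq_sum_ascents {M : Type*} [AddCommMonoid M] (F : Equiv.Perm (Fin (n + 1)) → M)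
    (k : Fin n) :
    ∑ σ, F σ = ∑ σ with σ k.castSucc < σ k.succ, (F σ + F (σ * adjT k)) := by
  rw [← Finset.sum_filter_add_sum_filter_not _ fun σ : Equiv.Perm _ => σ k.castSucc < σ k.succ,
    Finset.sum_add_distrib]
  congr 1
  refine Finset.sum_equiv (Equiv.mulRight (adjT k)) (fun σ => ?_) fun σ _ => ?_
  · have hne : σ k.castSucc ≠ σ k.succ := σ.injective.ne Fin.castSucc_lt_succ.ne
    simp [adjT_castSucc, adjT_succ, hne.symm.le_iff_lt]
  · simp [mul_assoc, adjT_mul_self]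

lemma qDet_eq_sum_ascents (q : Kˣ) (x : Matrix (Fin (n + 1)) (Fin (n + 1)) R) (k : Fin n) :
    qDet q x = ∑ σ : Equiv.Perm (Fin (n + 1)) with σ k.castSucc < σ k.succ,
      (-q⁻¹) ^ inversionCount σ •
        (wordMonomial x σ id + (-q⁻¹) • wordMonomial x (σ ∘ adjT k) id) := by
  rw [qDet, sum_perm_eq_sum_ascents _ k]
  refine Finset.sum_congr rfl fun σ hσ => ?_
  rw [Equiv.Perm.coe_mul, inversionCount_comp_adjT (Finset.mem_filter.1 hσ).2, pow_succ,
    mul_smul, smul_add]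

namespace IsQuantumMatrix

variable {κ : Type*} {q : Kˣ}

lemma qDet_submatrix_eq_zero_of_adjacent_eq [LT κ] {x : Matrix (Fin (n + 1)) κ R}
    (hx : IsQuantumMatrix q x) {f : Fin (n + 1) → κ} {k : Fin n} (hf : f k.castSucc = f k.succ) :
    qDet q (x.submatrix id f) = 0 := by
  rw [qDet_eq_sum_ascents q _ k]
  refine Finset.sum_eq_zero fun σ hσ => ?_
  obtain ⟨P, S, h₁, h₂, -⟩ := exists_wordMonomial_eq_mul_mul (x.submatrix id f) σ id k
  have hpair := hx.column_pair_eq_zero (Finset.mem_filter.1 hσ).2 (f k.succ)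
  simp only [Matrix.submatrix_apply, id_eq, hf] at h₁ h₂
  rw [h₁, h₂, ← smul_mul_assoc, ← mul_smul_comm, ← add_mul, ← mul_add, hpair, mul_zero, zero_mul,
    smul_zero]

lemma qDet_submatrix_comp_adjT [LT κ] {x : Matrix (Fin (n + 1)) κ R}
    (hx : IsQuantumMatrix q x) {f : Fin (n + 1) → κ} {k : Fin n} (hf : f k.castSucc < f k.succ) :
    qDet q (x.submatrix id (f ∘ adjT k)) = (-q⁻¹) • qDet q (x.submatrix id f) := by
  rw [qDet_eq_sum_ascents q _ k, qDet_eq_sum_ascents q _ k, Finset.smul_sum]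
  refine Finset.sum_congr rfl fun σ hσ => ?_
  obtain ⟨P, S, h₁, h₂, h₃, h₄⟩ := exists_wordMonomial_eq_mul_mul x σ f k
  have hpair := hx.column_pair_swap (Finset.mem_filter.1 hσ).2 hf
  change _ • (wordMonomial x σ (f ∘ adjT k) + _ • wordMonomial x (σ ∘ adjT k) (f ∘ adjT k)) =
    _ • _ • (wordMonomial x σ f + _ • wordMonomial x (σ ∘ adjT k) f)
  rw [smul_comm (-q⁻¹) (_ ^ _), h₁, h₂, h₃, h₄, ← smul_mul_assoc, ← mul_smul_comm, ← add_mul,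
    ← mul_add, hpair]
  simp only [mul_add, add_mul, smul_add, mul_smul_comm, smul_mul_assoc]

theorem qDet_submatrix_eq_zero [LinearOrder κ] {x : Matrix (Fin (n + 1)) κ R}
    (hx : IsQuantumMatrix q x) {f : Fin (n + 1) → κ} (hf : ¬ Injective f) :
    qDet q (x.submatrix id f) = 0 := by
  induction f using word_induction with
  | strictMono f hmono => exact absurd hmono.injective hf
  | adjacent_eq f k hk => exact hx.qDet_submatrix_eq_zero_of_adjacent_eq hk
  | comp_adjT f k hk ih =>
    rw [hx.qDet_submatrix_comp_adjT hk, ih, smul_zero]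
    rwa [Injective.of_comp_iff' f (adjT k).bijective] at hf

theorem qDet_submatrix_perm {x : Matrix (Fin (n + 1)) (Fin (n + 1)) R} (hx : IsQuantumMatrix q x)
    (σ : Equiv.Perm (Fin (n + 1))) :
    qDet q (x.submatrix id σ) = (-q⁻¹) ^ inversionCount σ • qDet q x := by
  induction σ using perm_induction with
  | one => simp [inversionCount_eq_zero strictMono_id]
  | mul_adjT σ k hk ih =>
    rw [Equiv.Perm.coe_mul, hx.qDet_submatrix_comp_adjT hk, ih, inversionCount_comp_adjT hk,
      pow_succ', mul_smul]

end IsQuantumMatrix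

end Alternating

section Symmetries

variable {q : Kˣ} {n : ℕ}

namespace IsQuantumMatrix

lemma wordMonomial_comp_adjT {ι κ : Type*} [LT ι] [LT κ] {x : Matrix ι κ R}
    (hx : IsQuantumMatrix q x) {w : Fin (n + 1) → ι} {f : Fin (n + 1) → κ} {k : Fin n}
    (hw : w k.castSucc < w k.succ) (hf : f k.succ < f k.castSucc) :
    wordMonomial x (w ∘ adjT k) (f ∘ adjT k) = wordMonomial x w f := by
  obtain ⟨P, S, h₁, -, -, h₂⟩ := exists_wordMonomial_eq_mul_mul x w f k
  rw [h₁, h₂, hx.antidiagonal_comm hw hf]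

/-- Bubble sorting the row word only exchanges entries in antidiagonal position, and these
commute. -/
lemma wordMonomial_eq_wordMonomial_id {κ : Type*} [Preorder κ] {x : Matrix (Fin (n + 1)) κ R}
    (hx : IsQuantumMatrix q x) (σ : Equiv.Perm (Fin (n + 1))) {f : Fin (n + 1) → κ}
    (hf : ∀ a b, a < b → σ b < σ a → f a < f b) :
    wordMonomial x σ f = wordMonomial x id (f ∘ ⇑σ⁻¹) := by
  induction σ using perm_induction generalizing f with
  | one => rfl
  | mul_adjT σ k hk ih =>
    have hdesc : (f ∘ adjT k) k.succ < (f ∘ adjT k) k.castSucc := by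
      simpa [adjT_castSucc, adjT_succ] using
        hf k.castSucc k.succ Fin.castSucc_lt_succ (by simpa [adjT_castSucc, adjT_succ] using hk)
    have hf' : ∀ a b, a < b → σ b < σ a → (f ∘ adjT k) a < (f ∘ adjT k) b := by
      intro a b hab hσ
      refine hf _ _ (adjT_lt_adjT hab ?_) (by simpa [adjT_adjT] using hσ)
      rintro ⟨⟩
      exact lt_asymm hk hσ
    calc wordMonomial x ⇑(σ * adjT k) f
        = wordMonomial x (σ ∘ adjT k) ((f ∘ adjT k) ∘ adjT k) := by
          rw [comp_adjT_comp_adjT, Equiv.Perm.coe_mul]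
      _ = wordMonomial x id ((f ∘ adjT k) ∘ ⇑σ⁻¹) := by
          rw [hx.wordMonomial_comp_adjT hk hdesc, ih hf']
      _ = wordMonomial x id (f ∘ ⇑(σ * adjT k)⁻¹) := by
          rw [mul_inv_rev, inv_eq_of_mul_eq_one_left (adjT_mul_self k)]
          rfl

theorem qDet_transpose {x : Matrix (Fin n) (Fin n) R} (hx : IsQuantumMatrix q x) :
    qDet q xᵀ = qDet q x := by
  cases n with
  | zero => simp [qDet, wordMonomial]
  | succ n =>
    refine Fintype.sum_equiv (Equiv.inv _) _ _ fun σ => ?_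
    have hmono : wordMonomial xᵀ σ id = wordMonomial xᵀ id ⇑σ⁻¹ :=
      hx.transpose.wordMonomial_eq_wordMonomial_id σ fun a b hab _ => hab
    rw [hmono, Equiv.inv_apply, inversionCount_inv]
    rfl

end IsQuantumMatrix

theorem qDet_revOp (q : Kˣ) (x : Matrix (Fin n) (Fin n) R) :
    qDet q (revOp x) = op (qDet q x) := by
  rw [qDet, qDet, Finset.op_sum]
  refine Fintype.sum_equiv (MulAut.conj Fin.revPerm).toEquiv _ _ fun σ => ?_
  have hconj : ⇑((MulAut.conj Fin.revPerm).toEquiv σ) = Fin.rev ∘ σ ∘ Fin.rev := rfl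
  have hid : Fin.rev ∘ id ∘ Fin.rev = (id : Fin n → Fin n) := funext Fin.rev_rev
  rw [hconj, inversionCount_rev, wordMonomial_revOp, op_smul, hid]

end Symmetries

section Laplace

variable {n : ℕ}

/-- The permutation of `Fin (n + 1)` with first value `p` whose remaining values are ordered as
those of `σ`. -/
def consPerm (p : Fin (n + 1)) (σ : Equiv.Perm (Fin n)) : Equiv.Perm (Fin (n + 1)) :=
  Equiv.ofBijective (Fin.cons p (p.succAbove ∘ σ)) <| Finite.injective_iff_bijective.1 <|
    Fin.cons_injective_iff.2
      ⟨fun ⟨_, ha⟩ => p.succAbove_ne _ ha, p.succAbove_right_injective.comp σ.injective⟩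

lemma coe_consPerm (p : Fin (n + 1)) (σ : Equiv.Perm (Fin n)) :
    ⇑(consPerm p σ) = Fin.cons p (p.succAbove ∘ σ) :=
  rfl

lemma consPerm_bijective :
    Bijective fun pσ : Fin (n + 1) × Equiv.Perm (Fin n) => consPerm pσ.1 pσ.2 := by
  rw [Fintype.bijective_iff_injective_and_card]
  refine ⟨?_, by simp [Fintype.card_perm, Nat.factorial_succ]⟩
  rintro ⟨p, σ⟩ ⟨p', σ'⟩ h
  have hcons : (Fin.cons p (p.succAbove ∘ σ) : Fin (n + 1) → Fin (n + 1)) =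
      Fin.cons p' (p'.succAbove ∘ σ') := congrArg DFunLike.coe h
  obtain ⟨rfl, htail⟩ := Fin.cons_inj.1 hcons
  have hσ : σ = σ' := DFunLike.coe_injective (p.succAbove_right_injective.comp_left htail)
  rw [hσ]

lemma inversionCount_consPerm (p : Fin (n + 1)) (σ : Equiv.Perm (Fin n)) :
    inversionCount (consPerm p σ) = p + inversionCount σ := by
  have hcard : Finset.card {b | p.succAbove (σ b) < p} = (p : ℕ) := by
    calc Finset.card {b | p.succAbove (σ b) < p}
        = Finset.card {b : Fin n | p.succAbove b < p} :=
          Finset.card_equiv σ fun b => by simp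
      _ = Finset.card {b : Fin n | b.castSucc < p} := by
          simp only [Fin.succAbove_lt_iff_castSucc_lt]
      _ = Finset.card {b : Fin n | (b : ℕ) < p} := by
          simp only [Fin.lt_def, Fin.val_castSucc]
      _ = p := by rw [Fin.card_filter_val_lt, min_eq_right (Nat.lt_succ_iff.1 p.2)]
  rw [inversionCount_eq_card_add, coe_consPerm]
  simp only [Fin.cons_succ, Fin.cons_zero, comp_apply, Fin.cons_comp_succ]
  rw [inversionCount_strictMono_comp p.strictMono_succAbove, ← hcard]

theorem qDet_eq_sum_column_zero (q : Kˣ) (x : Matrix (Fin (n + 1)) (Fin (n + 1)) R) :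
    qDet q x =
      ∑ k : Fin (n + 1), (-q⁻¹) ^ (k : ℕ) •
        (x k 0 * qDet q (x.submatrix k.succAbove Fin.succ)) := by
  rw [qDet, ← consPerm_bijective.sum_comp, Fintype.sum_prod_type]
  refine Finset.sum_congr rfl fun k _ => ?_
  rw [qDet, Finset.mul_sum, Finset.smul_sum]
  refine Finset.sum_congr rfl fun σ _ => ?_
  rw [inversionCount_consPerm, wordMonomial_succ, coe_consPerm, pow_add, mul_smul, mul_smul_comm]
  rfl

namespace IsQuantumMatrix

variable {q : Kˣ} {x : Matrix (Fin (n + 1)) (Fin (n + 1)) R}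

theorem sum_column_mul_minor (hx : IsQuantumMatrix q x) (i j : Fin (n + 1)) :
    ∑ k : Fin (n + 1), (-q⁻¹) ^ (k : ℕ) •
        (x k j * qDet q (x.submatrix k.succAbove i.succAbove)) =
      if i = j then (-q⁻¹) ^ (i : ℕ) • qDet q x else 0 := by
  have hexpand :
      ∑ k : Fin (n + 1), (-q⁻¹) ^ (k : ℕ) •
          (x k j * qDet q (x.submatrix k.succAbove i.succAbove)) =
        qDet q (x.submatrix id (Fin.cons j i.succAbove)) := by
    rw [qDet_eq_sum_column_zero]
    rfl
  rw [hexpand]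
  split_ifs with hij
  · subst hij
    have hperm := hx.qDet_submatrix_perm (consPerm i 1)
    rwa [inversionCount_consPerm, Equiv.Perm.coe_one, inversionCount_eq_zero strictMono_id,
      add_zero] at hperm
  · refine hx.qDet_submatrix_eq_zero fun hinj => (Fin.cons_injective_iff.1 hinj).1 ?_
    exact Fin.exists_succAbove_eq (Ne.symm hij)

theorem sum_row_mul_minor (hx : IsQuantumMatrix q x) (i j : Fin (n + 1)) :
    ∑ k : Fin (n + 1), (-q⁻¹) ^ (k : ℕ) •
        (x j k * qDet q (x.submatrix i.succAbove k.succAbove)) =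
      if i = j then (-q⁻¹) ^ (i : ℕ) • qDet q x else 0 := by
  rw [← hx.qDet_transpose, ← hx.transpose.sum_column_mul_minor]
  refine Finset.sum_congr rfl fun k _ => ?_
  rw [← (hx.submatrix i.strictMono_succAbove k.strictMono_succAbove).qDet_transpose]
  rfl

theorem sum_minor_mul_column (hx : IsQuantumMatrix q x) (i j : Fin (n + 1)) :
    ∑ k : Fin (n + 1), (-q⁻¹) ^ (k.rev : ℕ) •
        (qDet q (x.submatrix k.succAbove i.succAbove) * x k j) =
      if i = j then (-q⁻¹) ^ (i.rev : ℕ) • qDet q x else 0 := by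
  have hminor : ∀ k : Fin (n + 1), (revOp x).submatrix k.rev.succAbove i.rev.succAbove =
      revOp (x.submatrix k.succAbove i.succAbove) := fun k => by
    ext a b
    simp [revOp, Fin.rev_succAbove]
  have h := hx.revOp.sum_column_mul_minor i.rev j.rev
  rw [← Equiv.sum_comp Fin.revPerm] at h
  simp only [Fin.revPerm_apply, hminor, qDet_revOp, Fin.rev_inj] at h
  refine op_injective ?_
  rw [Finset.op_sum, apply_ite op, op_zero]
  simpa [revOp] using h

end IsQuantumMatrix

/-- The quantum adjugate of a square matrix: the transpose of its matrix of signed complementary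
quantum minors, where the quantum sign is an integer power of `-q⁻¹`, possibly negative. -/
def qAdjugate (q : Kˣ) (x : Matrix (Fin (n + 1)) (Fin (n + 1)) R) :
    Matrix (Fin (n + 1)) (Fin (n + 1)) R :=
  Matrix.of fun i j =>
    (-q⁻¹) ^ ((i : ℤ) - (j : ℤ)) • qDet q (x.submatrix j.succAbove i.succAbove)

namespace IsQuantumMatrix

variable {q : Kˣ} {x : Matrix (Fin (n + 1)) (Fin (n + 1)) R}

theorem mul_qAdjugate (hx : IsQuantumMatrix q x) :
    x * qAdjugate q x = Matrix.diagonal fun _ => qDet q x := by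
  ext i j
  have hterm : ∀ k : Fin (n + 1), x i k * qAdjugate q x k j = (-q⁻¹) ^ (-(j : ℤ)) •
      (-q⁻¹) ^ (k : ℕ) • (x i k * qDet q (x.submatrix j.succAbove k.succAbove)) := fun k => by
    rw [qAdjugate, Matrix.of_apply, mul_smul_comm, smul_smul, ← zpow_natCast, ← zpow_add]
    congr 2
    ring
  simp only [Matrix.mul_apply, hterm, ← Finset.smul_sum, hx.sum_row_mul_minor,
    Matrix.diagonal_apply, smul_ite, smul_zero, eq_comm (a := j)]
  split_ifs
  · rw [smul_smul, ← zpow_natCast, ← zpow_add, neg_add_cancel, zpow_zero, one_smul]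
  · rfl

theorem qAdjugate_mul (hx : IsQuantumMatrix q x) :
    qAdjugate q x * x = Matrix.diagonal fun _ => qDet q x := by
  ext i j
  have hterm : ∀ k : Fin (n + 1), qAdjugate q x i k * x k j = (-q⁻¹) ^ (-(i.rev : ℤ)) •
      (-q⁻¹) ^ (k.rev : ℕ) • (qDet q (x.submatrix k.succAbove i.succAbove) * x k j) := fun k => by
    rw [qAdjugate, Matrix.of_apply, smul_mul_assoc, smul_smul, ← zpow_natCast, ← zpow_add]
    congr 2
    rw [Fin.val_rev, Fin.val_rev]
    omega
  simp only [Matrix.mul_apply, hterm, ← Finset.smul_sum, hx.sum_minor_mul_column,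
    Matrix.diagonal_apply, smul_ite, smul_zero]
  split_ifs
  · rw [smul_smul, ← zpow_natCast, ← zpow_add, neg_add_cancel, zpow_zero, one_smul]
  · rfl

end IsQuantumMatrix

end Laplace

theorem qdet_central_general {n : ℕ} {q : Kˣ} {x : Matrix (Fin n) (Fin n) R}
    (hx : IsQuantumMatrix q x) (i j : Fin n) : qDet q x * x i j = x i j * qDet q x := by
  cases n with
  | zero => exact i.elim0
  | succ n =>
    have hassoc : (Matrix.diagonal fun _ => qDet q x) * x =
        x * Matrix.diagonal fun _ => qDet q x := by
      rw [← hx.mul_qAdjugate, Matrix.mul_assoc, hx.qAdjugate_mul, hx.mul_qAdjugate]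
    simpa using congrFun (congrFun hassoc i) j

end QuantumMatrix

section Generators

/-- `q^{1/2}` as a unit of the base ring. -/
def qhUnit : Aˣ where
  val := qh
  inv := qhi
  val_inv := by rw [qh, qhi, ← LaurentPolynomial.T_add]; rfl
  inv_val := by rw [qh, qhi, ← LaurentPolynomial.T_add]; rfl

lemma isQuantumMatrix_Xg (m : ℕ) : IsQuantumMatrix qhUnit (Matrix.of (Xg (m := m))) where
  row_comm {i k l} hkl := by
    simpa [Xg, Algebra.smul_def] using! RingQuot.mkAlgHom_rel A (QRel.r1 i k l hkl)
  column_comm {i j k} hij := by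
    simpa [Xg, Algebra.smul_def] using! RingQuot.mkAlgHom_rel A (QRel.r2 i j k hij)
  antidiagonal_comm {i j k l} hij hkl := by
    simpa [Xg] using! RingQuot.mkAlgHom_rel A (QRel.r3 i j k l hij hkl)
  diagonal_comm {i j k l} hij hkl := by
    simpa only [Xg, Algebra.smul_def, map_mul, map_add, AlgHom.commutes] using!
      RingQuot.mkAlgHom_rel A (QRel.r4 i j k l hij hkl)

lemma qdet_eq_qDet (m : ℕ) : qdet m = qDet qhUnit (Matrix.of (Xg (m := m))) := by
  refine Finset.sum_congr rfl fun σ _ => ?_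
  rw [len_eq_inversionCount, Units.smul_def, Units.val_pow_eq_pow_val]
  rfl

end Generators

/-- The quantum determinant is a central element of the quantum matrix bialgebra:
it commutes with every generator `x_{i,j}`. -/
theorem qdet_central {m : ℕ} (i j : Fin m) :
    qdet m * Xg i j = Xg i j * qdet m := by
  rw [qdet_eq_qDet]
  exact qdet_central_general (isQuantumMatrix_Xg m) i j
end
end

section
/- For each fixed u ∈ S_n, the set {x^{u,v} : v ∈ S_n} of monomials is a basis of the zero-weight space of the quantum matrix bialgebra A(n; q) as a free Z[q^{1/2}, q^{-1/2}]-module. -/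
noncomputable section

attribute [local instance] Classical.propDecidable

/-! Straightening the adjacent factors `k`, `k + 1` of a monomial gives, for `s = s_k`,
`x^{u,v} = x^{us,vs} + c x^{us,v}`, so all the families `x^{u,·}` have the same span. As they are
finite families of the same size over a commutative ring, the independence of one of them gives
that of all the others. For `u = 1` independence is seen in a representation of `A(m;q)` built by
adding the rows one at a time from the bottom: the new top row creates basis vectors indexed by the
columns, and the lower rows act past a created vector according to the straightening relations.
That the relations between lower rows survive is the Yang–Baxter equation, which holds since
`p = q^{1/2}` and `z = q^{1/2} - q^{-1/2}` satisfy the Hecke relation `p² = zp + 1`.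
-/

universe u v

theorem exists_prod_ofFn_eq_mul_mul_s11 {S : Type*} [Monoid S] {n : ℕ} (i : Fin n)
    (f : Fin (n + 1) → S) :
    ∃ a b : S, ∀ g : Fin (n + 1) → S, (∀ k, k ≠ i.castSucc → k ≠ i.succ → g k = f k) →
      (List.ofFn g).prod = a * (g i.castSucc * g i.succ) * b := by
  induction n with
  | zero => exact i.elim0
  | succ n ih =>
    induction i using Fin.cases with
    | zero =>
      refine ⟨1, (List.ofFn fun k : Fin n => f k.succ.succ).prod, fun g hg => ?_⟩
      have hg' : (fun k : Fin n => g k.succ.succ) = fun k => f k.succ.succ :=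
        funext fun k => hg _ (Fin.succ_ne_zero _) (by simp [Fin.ext_iff])
      simp [List.ofFn_succ, hg', mul_assoc]
    | succ i =>
      obtain ⟨a, b, hab⟩ := ih i (Fin.tail f)
      refine ⟨f 0 * a, b, fun g hg => ?_⟩
      have hg0 : g 0 = f 0 := hg 0 (by simp [Fin.ext_iff]) (Fin.succ_ne_zero _).symm
      have htail := hab (Fin.tail g) fun k h₁ h₂ => hg k.succ
        (by simpa [← Fin.succ_castSucc] using h₁) (by simpa using h₂)
      rw [List.ofFn_succ, List.prod_cons, hg0]
      refine (congrArg (f 0 * ·) htail).trans ?_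
      simp only [Fin.tail, Fin.succ_castSucc, mul_assoc]

theorem linearIndependent_of_span_range_eq {R N ι : Type*} [Semiring R] [OrzechProperty R]
    [AddCommMonoid N] [Module R N] [Finite ι] {f g : ι → N} (hf : LinearIndependent R f)
    (h : Submodule.span R (Set.range g) = Submodule.span R (Set.range f)) :
    LinearIndependent R g := by
  let toSpan : (ι →₀ R) →ₗ[R] Submodule.span R (Set.range f) :=
    (Finsupp.linearCombination R g).codRestrict _ fun c =>
      h ▸ Finsupp.range_linearCombination R (v := g) ▸ LinearMap.mem_range_self _ c
  have toSpan_surjective : Function.Surjective toSpan := by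
    rintro ⟨x, hx⟩
    rw [← h, ← Finsupp.range_linearCombination] at hx
    obtain ⟨c, rfl⟩ := hx
    exact ⟨c, rfl⟩
  have repr_toSpan_injective : Function.Injective (hf.repr ∘ toSpan) :=
    OrzechProperty.injective_of_surjective_endomorphism (hf.repr ∘ₗ toSpan)
      (hf.linearCombinationEquiv.symm.surjective.comp toSpan_surjective)
  have toSpan_injective : Function.Injective toSpan := repr_toSpan_injective.of_comp
  exact Subtype.val_injective.comp toSpan_injective

section QuantumMatrix

variable {R S κ : Type*} [CommRing R] [LinearOrder κ]

/-- The relations of a quantum matrix between a row `x` and a row `y` below it, for a general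
parameter `p` in place of `q^{1/2}` and `z` in place of `q^{1/2} - q^{-1/2}`. The relations for
`k = l`, `k < l` and `l < k` (`r2`, `r3` and `r4` of `QRel`) are combined into one formula, which
moves a factor from `y` to the right of a factor from `x`. -/
def RowsExchange [Semiring S] [Module R S] (p z : R) (x y : κ → S) : Prop :=
  ∀ k l, y k * x l =
    (if k = l then p else 1) • (x l * y k) + (if l < k then z else 0) • (x k * y l)

/-- A matrix satisfying the quantum relations in which, moreover, any two entries of the same row
multiply to zero. This is stronger than the relation `r1` of `QRel`, but loses nothing on monomials
with one factor from each row. -/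
structure IsNilpotentQuantumMatrix {ι : Type*} [LT ι] [Semiring S] [Module R S] (p z : R)
    (X : ι → κ → S) : Prop where
  mul_same_row : ∀ i k l, X i k * X i l = 0
  rowsExchange : ∀ {i j}, i < j → RowsExchange p z (X i) (X j)

variable {M : Type*} [AddCommMonoid M] [Module R M]

/-- The action of a row `x` on `κ →₀ M`, where `Finsupp.single b m` stands for `x' b` applied to
`m`, with `x'` a row above `x`: the entry `x k` is moved past `x' b` as in `RowsExchange`. -/
def transfer (p z : R) (x : κ → Module.End R M) (k : κ) : Module.End R (κ →₀ M) :=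
  Finsupp.lsum R fun b => (if k = b then p else 1) • (Finsupp.lsingle b ∘ₗ x k) +
    (if b < k then z else 0) • (Finsupp.lsingle k ∘ₗ x b)

theorem transfer_single (p z : R) (x : κ → Module.End R M) (k b : κ) (m : M) :
    transfer p z x k (Finsupp.single b m) =
      (if k = b then p else 1) • Finsupp.single b (x k m) +
        (if b < k then z else 0) • Finsupp.single k (x b m) := by
  simp only [transfer, Finsupp.lsum_single, LinearMap.add_apply, LinearMap.smul_apply,
    LinearMap.comp_apply, Finsupp.lsingle_apply]

theorem transfer_mul_transfer_eq_zero (p z : R) {x : κ → Module.End R M}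
    (hx : ∀ k l, x k * x l = 0) (k l : κ) : transfer p z x k * transfer p z x l = 0 := by
  have hx' (k l m) : x k (x l m) = 0 := LinearMap.congr_fun (hx k l) m
  ext b m : 2
  simp only [LinearMap.comp_apply, Finsupp.lsingle_apply, Module.End.mul_apply,
    transfer_single, map_add, map_smul, hx', Finsupp.single_zero, smul_zero, add_zero,
    LinearMap.zero_apply]

theorem RowsExchange.transfer {p z : R} (hp : p * p = z * p + 1) {x y : κ → Module.End R M}
    (h : RowsExchange p z x y) : RowsExchange p z (transfer p z x) (transfer p z y) := by
  have h' (k l m) := LinearMap.congr_fun (h k l) m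
  simp only [Module.End.mul_apply, LinearMap.add_apply, LinearMap.smul_apply] at h'
  intro k l
  ext b m : 2
  simp only [LinearMap.comp_apply, Finsupp.lsingle_apply, Module.End.mul_apply,
    LinearMap.add_apply, LinearMap.smul_apply, transfer_single, map_add, map_smul, h',
    Finsupp.single_add, ← Finsupp.smul_single]
  -- The coefficients agree identically except when `k = l ≠ b` or `k ≠ l = b`, where the two sides
  -- are equal by the Hecke relation.
  obtain rfl | hkl := eq_or_ne k l
  · obtain rfl | hkb := eq_or_ne k b <;> match_scalars <;> grind
  · obtain rfl | hkb := eq_or_ne k b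
    · match_scalars <;> grind
    · obtain rfl | hlb := eq_or_ne l b <;> match_scalars <;> grind

variable {r : ℕ}

/-- The matrix `X` with a new top row. The summand `M` of `M × (κ →₀ M)` holds the vectors to which
the new row has not been applied, and `Finsupp.single b m` in the other summand is the image of `m`
under the entry `b` of the new row. -/
def consRow (p z : R) (X : Fin r → κ → Module.End R M) :
    Fin (r + 1) → κ → Module.End R (M × (κ →₀ M)) :=
  Fin.cons
    (fun k => LinearMap.inr R M (κ →₀ M) ∘ₗ Finsupp.lsingle k ∘ₗ LinearMap.fst R M (κ →₀ M))
    fun i k => (X i k).prodMap (transfer p z (X i) k)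

theorem consRow_zero_apply (p z : R) (X : Fin r → κ → Module.End R M) (k : κ)
    (a : M × (κ →₀ M)) : consRow p z X 0 k a = (0, Finsupp.single k a.1) := rfl

theorem consRow_succ_apply (p z : R) (X : Fin r → κ → Module.End R M) (i : Fin r) (k : κ)
    (a : M × (κ →₀ M)) :
    consRow p z X i.succ k a = (X i k a.1, transfer p z (X i) k a.2) := rfl

theorem RowsExchange.consRow_succ {p z : R} (hp : p * p = z * p + 1)
    {X : Fin r → κ → Module.End R M} {i j : Fin r} (h : RowsExchange p z (X i) (X j)) :
    RowsExchange p z (consRow p z X i.succ) (consRow p z X j.succ) := by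
  intro k l
  refine LinearMap.ext fun a => Prod.ext ?_ ?_
  · exact LinearMap.congr_fun (h k l) a.1
  · exact LinearMap.congr_fun (h.transfer hp k l) a.2

theorem rowsExchange_consRow_zero_succ (p z : R) (X : Fin r → κ → Module.End R M) (j : Fin r) :
    RowsExchange p z (consRow p z X 0) (consRow p z X j.succ) := by
  intro k l
  refine LinearMap.ext fun a => ?_
  simp only [Module.End.mul_apply, LinearMap.add_apply, LinearMap.smul_apply, consRow_zero_apply,
    consRow_succ_apply, transfer_single, map_zero, Prod.smul_mk, Prod.mk_add_mk, smul_zero,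
    add_zero]

theorem IsNilpotentQuantumMatrix.consRow {p z : R} (hp : p * p = z * p + 1)
    {X : Fin r → κ → Module.End R M} (hX : IsNilpotentQuantumMatrix p z X) :
    IsNilpotentQuantumMatrix p z (consRow p z X) where
  mul_same_row i k l := by
    refine LinearMap.ext fun a => ?_
    cases i using Fin.cases with
    | zero => simp [consRow_zero_apply]
    | succ i =>
      exact Prod.ext (LinearMap.congr_fun (hX.mul_same_row i k l) a.1)
        (LinearMap.congr_fun (transfer_mul_transfer_eq_zero p z (hX.mul_same_row i) k l) a.2)
  rowsExchange {i j} hij := by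
    cases j using Fin.cases with
    | zero => exact absurd hij (Fin.not_lt_zero i)
    | succ j =>
      cases i using Fin.cases with
      | zero => exact rowsExchange_consRow_zero_succ p z X j
      | succ i => exact (hX.rowsExchange (Fin.succ_lt_succ_iff.mp hij)).consRow_succ hp

theorem prod_consRow_succ_apply (p z : R) (X : Fin r → κ → Module.End R M)
    (l : List (Fin r × κ)) (m : M) :
    (l.map fun ik => consRow p z X ik.1.succ ik.2).prod (m, 0) =
      ((l.map fun ik => X ik.1 ik.2).prod m, 0) := by
  induction l with
  | nil => rfl
  | cons ik l ih =>
    simp only [List.map_cons, List.prod_cons, Module.End.mul_apply, ih, consRow_succ_apply,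
      map_zero]

theorem prod_ofFn_consRow_apply (p z : R) (X : Fin r → κ → Module.End R M)
    (c : Fin (r + 1) → κ) (m : M) :
    (List.ofFn fun i => consRow p z X i (c i)).prod (m, 0) =
      (0, Finsupp.single (c 0) ((List.ofFn fun i => X i (Fin.tail c i)).prod m)) := by
  have htail := prod_consRow_succ_apply p z X (List.ofFn fun i => (i, Fin.tail c i)) m
  simp only [List.map_ofFn, Function.comp_def, Fin.tail] at htail
  rw [List.ofFn_succ, List.prod_cons, Module.End.mul_apply, htail, consRow_zero_apply]
  rfl

theorem linearIndependent_prod_consRow (p z : R) {X : Fin r → κ → Module.End R M} {m : M}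
    (h : LinearIndependent R fun c : Fin r → κ => (List.ofFn fun i => X i (c i)).prod m) :
    LinearIndependent R fun c : Fin (r + 1) → κ =>
      (List.ofFn fun i => consRow p z X i (c i)).prod (m, 0) := by
  simp only [prod_ofFn_consRow_apply]
  have hsingle := (Finsupp.linearIndependent_single _ fun _ : κ => h).comp
    (fun c : Fin (r + 1) → κ => ⟨c 0, Fin.tail c⟩)
    ((Equiv.sigmaEquivProd _ _).symm.injective.comp (Fin.consEquiv fun _ => κ).symm.injective)
  exact hsingle.map_injOn (LinearMap.inr R M (κ →₀ M)) LinearMap.inr_injective.injOn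

end QuantumMatrix

theorem exists_isNilpotentQuantumMatrix_linearIndependent {R : Type u} {κ : Type v}
    [CommRing R] [LinearOrder κ] {p z : R} (hp : p * p = z * p + 1) (r : ℕ) :
    ∃ (M : Type (max u v)) (_ : AddCommMonoid M) (_ : Module R M)
      (X : Fin r → κ → Module.End R M) (m : M), IsNilpotentQuantumMatrix p z X ∧
      LinearIndependent R fun c : Fin r → κ => (List.ofFn fun i => X i (c i)).prod m := by
  induction r with
  | zero =>
    refine ⟨(Fin 0 → κ) →₀ R, inferInstance, inferInstance, fun i => i.elim0,
      Finsupp.single default 1, ⟨fun i => i.elim0, fun {i} => i.elim0⟩, ?_⟩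
    convert Finsupp.linearIndependent_single_one R (Fin 0 → κ) using 2 with c
    rw [Subsingleton.elim c default]
    rfl
  | succ r ih =>
    obtain ⟨M, _, _, X, m, hX, hm⟩ := ih
    exact ⟨M × (κ →₀ M), inferInstance, inferInstance, consRow p z X, (m, 0), hX.consRow hp,
      linearIndependent_prod_consRow p z hm⟩

section Qmb

variable {m : ℕ}

theorem qh_mul_qh : qh * qh = (qh - qhi) * qh + 1 := by
  have : qhi * qh = 1 := by
    rw [qhi, qh, ← LaurentPolynomial.T_add, neg_add_cancel, LaurentPolynomial.T_zero]
  rw [sub_mul, this, sub_add_cancel]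

/-- The universal property of `A(m;q)`: a matrix satisfying the quantum relations defines an algebra
homomorphism. -/
def Qmb.lift {S : Type*} [Semiring S] [Algebra A S] (X : Fin m → Fin m → S)
    (hrow : ∀ i k l, k < l → X i l * X i k = qh • (X i k * X i l))
    (hX : ∀ i j, i < j → RowsExchange qh (qh - qhi) (X i) (X j)) : Qmb m →ₐ[A] S :=
  RingQuot.liftAlgHom A ⟨FreeAlgebra.lift A fun ij => X ij.1 ij.2, fun x y hxy => by
    cases hxy with
    | r1 i k l h => simpa [Algebra.smul_def] using hrow i k l h
    | r2 i j k h => simpa [Algebra.smul_def] using hX i j h k k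
    | r3 i j k l hij hkl => simpa [hkl.ne, hkl.not_gt] using hX i j hij k l
    | r4 i j k l hij hkl => simpa [hkl.ne', hkl, Algebra.smul_def, -map_sub] using hX i j hij l k⟩

theorem Qmb.lift_Xg {S : Type*} [Semiring S] [Algebra A S] (X : Fin m → Fin m → S)
    (hrow : ∀ i k l, k < l → X i l * X i k = qh • (X i k * X i l))
    (hX : ∀ i j, i < j → RowsExchange qh (qh - qhi) (X i) (X j)) (i j : Fin m) :
    Qmb.lift X hrow hX (Xg i j) = X i j := by
  simp [Qmb.lift, Xg]

theorem rowsExchange_Xg {i j : Fin m} (hij : i < j) :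
    RowsExchange qh (qh - qhi) (Xg (m := m) i) (Xg j) := by
  intro k l
  have rel {a b} (h : QRel m a b) := RingQuot.mkAlgHom_rel A h
  rcases lt_trichotomy k l with hkl | rfl | hlk
  · simpa [Xg, hkl.ne, hkl.not_gt] using rel (.r3 i j k l hij hkl)
  · simpa [Xg, Algebra.smul_def] using rel (.r2 i j k hij)
  · simpa [Xg, hlk.ne', hlk, Algebra.smul_def] using rel (.r4 i j l k hij hlk)

theorem exists_Xg_mul_Xg_eq {i j k l : Fin m} (hij : i ≠ j) (hkl : k ≠ l) :
    ∃ c : A, Xg i k * Xg j l = Xg j l * Xg i k + c • (Xg j k * Xg i l) := by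
  obtain h | h := hij.lt_or_gt
  · obtain hkl | hlk := hkl.lt_or_gt
    · have hlk' : Xg j l * Xg i k = Xg i k * Xg j l + (qh - qhi) • (Xg i l * Xg j k) := by
        simpa [hkl.ne', hkl] using rowsExchange_Xg h l k
      have hkl' : Xg j k * Xg i l = Xg i l * Xg j k := by
        simpa [hkl.ne, hkl.not_gt] using rowsExchange_Xg h k l
      refine ⟨-(qh - qhi), ?_⟩
      rw [hlk', hkl', add_assoc, ← add_smul, add_neg_cancel, zero_smul, add_zero]
    · refine ⟨0, ?_⟩
      simpa [hlk.ne, hlk.not_gt] using (rowsExchange_Xg h l k).symm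
  · have hexch := rowsExchange_Xg h k l
    rw [if_neg hkl, one_smul] at hexch
    exact ⟨_, hexch⟩

theorem exists_xm_eq_add_smul {n : ℕ} (u v : Equiv.Perm (Fin (n + 1))) (i : Fin n) :
    ∃ c : A, xm u v = xm (u * adjT i) (v * adjT i) + c • xm (u * adjT i) v := by
  have hi : i.castSucc ≠ i.succ := Fin.castSucc_lt_succ.ne
  have hswap (w : Equiv.Perm (Fin (n + 1))) (k) (h₁ : k ≠ i.castSucc) (h₂ : k ≠ i.succ) :
      (w * adjT i) k = w k := by
    rw [adjT, Equiv.Perm.mul_apply, Equiv.swap_apply_of_ne_of_ne h₁ h₂]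
  obtain ⟨a, b, hab⟩ := exists_prod_ofFn_eq_mul_mul_s11 i fun k => Xg (u k) (v k)
  obtain ⟨c, hc⟩ := exists_Xg_mul_Xg_eq (u.injective.ne hi) (v.injective.ne hi)
  refine ⟨c, ?_⟩
  rw [xm, xm, xm, hab _ fun _ _ _ => rfl,
    hab _ fun k h₁ h₂ => by rw [hswap u k h₁ h₂, hswap v k h₁ h₂],
    hab _ fun k h₁ h₂ => by rw [hswap u k h₁ h₂], hc]
  simp [adjT, mul_add, add_mul]

theorem span_xm_le_span_xm_mul_adjT {n : ℕ} (u : Equiv.Perm (Fin (n + 1))) (i : Fin n) :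
    Submodule.span A (Set.range (xm u)) ≤ Submodule.span A (Set.range (xm (u * adjT i))) := by
  rw [Submodule.span_le]
  rintro _ ⟨v, rfl⟩
  obtain ⟨c, hc⟩ := exists_xm_eq_add_smul u v i
  rw [hc]
  exact add_mem (Submodule.subset_span ⟨_, rfl⟩)
    (Submodule.smul_mem _ _ (Submodule.subset_span ⟨_, rfl⟩))

theorem span_xm_mul_adjT {n : ℕ} (u : Equiv.Perm (Fin (n + 1))) (i : Fin n) :
    Submodule.span A (Set.range (xm (u * adjT i))) = Submodule.span A (Set.range (xm u)) := by
  refine le_antisymm ?_ (span_xm_le_span_xm_mul_adjT u i)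
  simpa [adjT, mul_assoc] using span_xm_le_span_xm_mul_adjT (u * adjT i) i

theorem span_xm_eq_span_xm_one (u : Equiv.Perm (Fin m)) :
    Submodule.span A (Set.range (xm u)) = Submodule.span A (Set.range (xm 1)) := by
  cases m with
  | zero => rw [Subsingleton.elim u 1]
  | succ n =>
    have hu : u ∈ Submonoid.closure (Set.range (adjT (n := n))) :=
      (Equiv.Perm.mclosure_swap_castSucc_succ n).ge (Submonoid.mem_top u)
    induction hu using Submonoid.closure_induction_right with
    | one => rfl
    | mul_right w _ _ hs ih =>
      obtain ⟨i, rfl⟩ := hs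
      exact (span_xm_mul_adjT w i).trans ih

theorem linearIndependent_prod_Xg :
    LinearIndependent A fun c : Fin m → Fin m => (List.ofFn fun i => Xg i (c i)).prod := by
  obtain ⟨M, _, _, X, vac, hX, hvac⟩ :=
    exists_isNilpotentQuantumMatrix_linearIndependent (κ := Fin m) qh_mul_qh m
  let φ : Qmb m →ₐ[A] Module.End A M := Qmb.lift X
    (fun i k l _ => by rw [hX.mul_same_row, hX.mul_same_row, smul_zero])
    fun _ _ hij => hX.rowsExchange hij
  refine LinearIndependent.of_comp (LinearMap.applyₗ vac ∘ₗ φ.toLinearMap) ?_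
  have hφ (c : Fin m → Fin m) : φ (List.ofFn fun i => Xg i (c i)).prod =
      (List.ofFn fun i => X i (c i)).prod := by
    simp [φ, map_list_prod, Function.comp_def, Qmb.lift_Xg]
  simpa only [Function.comp_def, LinearMap.comp_apply, AlgHom.toLinearMap_apply, hφ,
    LinearMap.applyₗ_apply_apply] using hvac

theorem linearIndependent_xm_one :
    LinearIndependent A fun v : Equiv.Perm (Fin m) => xm 1 v :=
  linearIndependent_prod_Xg.comp _ DFunLike.coe_injective

end Qmb

/-- For each fixed `u`, the family `{x^{u,v} : v ∈ S_m}` is a basis of the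
zero-weight space (the span of the monomials `x^{e,w}`) of the quantum matrix
bialgebra, as a free `ℤ[q^{1/2},q^{-1/2}]`-module. -/
theorem xm_basis {m : ℕ} (u : Equiv.Perm (Fin m)) :
    (LinearIndependent A fun v : Equiv.Perm (Fin m) => xm u v) ∧
    Submodule.span A (Set.range fun v : Equiv.Perm (Fin m) => xm u v) =
      Submodule.span A (Set.range fun w : Equiv.Perm (Fin m) => xm 1 w) :=
  ⟨linearIndependent_of_span_range_eq linearIndependent_xm_one (span_xm_eq_span_xm_one u),
    span_xm_eq_span_xm_one u⟩
end
end
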